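/- Minimal output entropy of the convolutional channel: for n-qudit states ρ and σ, the output state ρ ⊠ σ is pure (equivalently, H(ρ ⊠ σ) = 0, the minimal possible output entropy) if and only if ρ and σ are both pure stabilizer states whose stabilizer label groups S₁, S₂ ⊆ V^n satisfy S₁ = {(−g₁₀⁻¹ g₁₁ x⃗, g₀₁⁻¹ g₀₀ y⃗) : (x⃗, y⃗) ∈ S₂}, where inverses are taken in ℤ_d. -/

import Mathlib

open scoped BigOperators ComplexOrder Classical ENNReal
open Matrix

namespace PaperQI

/-- The computational-basis index set `ℤ_d^n` for an `n`-qudit system. -/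
abbrev QV (d n : ℕ) := Fin n → ZMod d

/-- Matrices (linear operators) on the `n`-qudit Hilbert space `(ℂ^d)^{⊗ n}`,
written in the computational basis indexed by `ℤ_d^n`. -/
abbrev Mat (d n : ℕ) := Matrix (QV d n) (QV d n) ℂ

/-- The character `ξ^z = exp(2πi z/d)` for `z ∈ ℤ_d`. -/
noncomputable def ch (d : ℕ) (z : ZMod d) : ℂ :=
  Complex.exp (2 * Real.pi * Complex.I * (z.val : ℂ) / (d : ℂ))

/-- Dot product on `ℤ_d^n`. -/
def qdot {d n : ℕ} (p k : QV d n) : ZMod d := ∑ i, p i * k i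

/-- The `n`-qudit Weyl operator `w(p,q) = ⊗_i ξ^{-2⁻¹ p_i q_i} Z^{p_i} X^{q_i}`
(for odd prime `d`).  Its matrix entries are
`w(p,q)[k+q, k] = ξ^{p·k + 2⁻¹ p·q}`. -/
noncomputable def weyl (d n : ℕ) [Fact (Nat.Prime d)] (p q : QV d n) : Mat d n :=
  Matrix.of fun k' k =>
    if k' = k + q then ch d (qdot p k + (2 : ZMod d)⁻¹ * qdot p q) else 0

/-- `ρ` is an `n`-qudit state: positive semidefinite with trace one. -/
def IsState (d n : ℕ) [Fact (Nat.Prime d)] (ρ : Mat d n) : Prop :=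
  ρ.PosSemidef ∧ ρ.trace = 1

/-- The characteristic function `Ξ_ρ(p,q) = Tr[ρ w(-p,-q)]`. -/
noncomputable def xi (d n : ℕ) [Fact (Nat.Prime d)] (ρ : Mat d n)
    (pq : QV d n × QV d n) : ℂ :=
  (ρ * weyl d n (-pq.1) (-pq.2)).trace

/-- The mean state `M(ρ) = d^{-n} ∑_{|Ξ_ρ(p,q)| = 1} Ξ_ρ(p,q) w(p,q)`. -/
noncomputable def meanState (d n : ℕ) [Fact (Nat.Prime d)] (ρ : Mat d n) : Mat d n :=
  ((d : ℂ) ^ n)⁻¹ •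
    ∑ pq : QV d n × QV d n,
      if ‖xi d n ρ pq‖ = 1 then xi d n ρ pq • weyl d n pq.1 pq.2 else 0

/-- `ρ` is a minimal stabilizer-projection state (MSPS): for some `r ≤ n` there are
mutually commuting Weyl operators `w(p_i,q_i)`, `i = 1,…,r`, whose labels generate a
subgroup of `V^n` of order `d^r`, and phases `x ∈ ℤ_d^r`, such that
`ρ = d^{-(n-r)} ∏_i ( (1/d) ∑_{k ∈ ℤ_d} (ξ^{x_i} w(p_i,q_i))^k )`. -/
noncomputable def IsMSPS (d n : ℕ) [Fact (Nat.Prime d)] (ρ : Mat d n) : Prop :=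
  ∃ r : ℕ, r ≤ n ∧
    ∃ (p q : Fin r → QV d n) (x : Fin r → ZMod d),
      (∀ i j, Commute (weyl d n (p i) (q i)) (weyl d n (p j) (q j))) ∧
      Nat.card (AddSubgroup.closure (Set.range fun i => (p i, q i)) :
        AddSubgroup (QV d n × QV d n)) = d ^ r ∧
      ρ = ((d : ℂ) ^ (n - r))⁻¹ •
        (List.ofFn fun i =>
          (d : ℂ)⁻¹ • ∑ k : ZMod d, (ch d (x i) • weyl d n (p i) (q i)) ^ k.val).prod

/-- The magic gap `MG(ρ) = 1 - max{|Ξ_ρ(p,q)| : Ξ_ρ(p,q) ≠ 0, |Ξ_ρ(p,q)| ≠ 1}`,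
and `MG(ρ) = 0` if this set is empty. -/
noncomputable def magicGap (d n : ℕ) [Fact (Nat.Prime d)] (ρ : Mat d n) : ℝ :=
  let s : Finset ℝ :=
    (Finset.univ.filter fun pq : QV d n × QV d n =>
      xi d n ρ pq ≠ 0 ∧ ‖xi d n ρ pq‖ ≠ 1).image
      fun pq => ‖xi d n ρ pq‖
  if h : s.Nonempty then 1 - s.max' h else 0

/-- Von Neumann entropy `H(ρ) = -∑ λ_i log λ_i` (natural log, eigenvalues of `ρ`),
with the convention `0 log 0 = 0`; junk value `0` on non-Hermitian matrices. -/
noncomputable def vnEnt {d n : ℕ} [Fact (Nat.Prime d)] (ρ : Mat d n) : ℝ :=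
  if h : ρ.IsHermitian then -∑ i, h.eigenvalues i * Real.log (h.eigenvalues i) else 0

/-- Rényi entropy `H_α` for `α ∈ [0,∞]`:  `H_0 = log rank`, `H_1 = H` (von Neumann),
`H_∞ = -log λ_max`, and `H_α = (1-α)⁻¹ log ∑ λ_i^α` otherwise. -/
noncomputable def renyiEnt {d n : ℕ} [Fact (Nat.Prime d)] (α : ℝ≥0∞) (ρ : Mat d n) : ℝ :=
  if h : ρ.IsHermitian then
    if α = 0 then Real.log (ρ.rank : ℝ)
    else if α = 1 then -∑ i, h.eigenvalues i * Real.log (h.eigenvalues i)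
    else if α = ⊤ then -Real.log (⨆ i, h.eigenvalues i)
    else (1 - α.toReal)⁻¹ * Real.log (∑ i, h.eigenvalues i ^ α.toReal)
  else 0

/-- Matrix logarithm on the support: `log ρ = U diag(log λ_i) U†` via the spectral
decomposition, with `log 0 = 0` on the kernel; junk value `0` off Hermitian matrices. -/
noncomputable def matLog {d n : ℕ} [Fact (Nat.Prime d)] (ρ : Mat d n) : Mat d n :=
  if h : ρ.IsHermitian then
    (h.eigenvectorUnitary : Mat d n) *
      Matrix.diagonal (fun i => (Real.log (h.eigenvalues i) : ℂ)) *
      star (h.eigenvectorUnitary : Mat d n)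
  else 0

/-- Matrix real power on the support: `ρ^t = U diag(λ_i^t) U†`, with `0^t = 0` on the
kernel (for `t ≠ 0`); junk value `0` off Hermitian matrices. -/
noncomputable def matRpow {d n : ℕ} [Fact (Nat.Prime d)] (ρ : Mat d n) (t : ℝ) : Mat d n :=
  if h : ρ.IsHermitian then
    (h.eigenvectorUnitary : Mat d n) *
      Matrix.diagonal (fun i => ((h.eigenvalues i ^ t : ℝ) : ℂ)) *
      star (h.eigenvectorUnitary : Mat d n)
  else 0

/-- Support inclusion `supp ρ ⊆ supp σ`, expressed as `ker σ ⊆ ker ρ`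
(the correct notion for positive semidefinite matrices). -/
def suppLE {d n : ℕ} [Fact (Nat.Prime d)] (ρ σ : Mat d n) : Prop :=
  ∀ v : QV d n → ℂ, σ.mulVec v = 0 → ρ.mulVec v = 0

/-- Relative entropy `D(ρ‖σ) = Tr[ρ(log ρ - log σ)]` when `supp ρ ⊆ supp σ`, else `+∞`. -/
noncomputable def relEnt {d n : ℕ} [Fact (Nat.Prime d)] (ρ σ : Mat d n) : EReal :=
  if suppLE ρ σ then (((ρ * (matLog ρ - matLog σ)).trace.re : ℝ) : EReal) else ⊤

/-- Sandwiched Rényi relative entropy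
`D_α(ρ‖σ) = (α-1)⁻¹ log Tr[(σ^{(1-α)/(2α)} ρ σ^{(1-α)/(2α)})^α]` for `α ≠ 1`
(with `+∞` when `supp ρ ⊄ supp σ`), and `D_1 = D` the relative entropy. -/
noncomputable def sandRenyi {d n : ℕ} [Fact (Nat.Prime d)] (α : ℝ) (ρ σ : Mat d n) :
    EReal :=
  if α = 1 then relEnt ρ σ
  else if suppLE ρ σ then
    let x : ℝ := (α - 1)⁻¹ * Real.log
      ((matRpow (matRpow σ ((1 - α) / (2 * α)) * ρ * matRpow σ ((1 - α) / (2 * α)))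
        α).trace.re)
    (x : EReal)
  else ⊤

/-- The key unitary `U|i,j⟩ = |N g₁₁ i - N g₁₀ j, -N g₀₁ i + N g₀₀ j⟩`,
where `N = (det G)⁻¹` in `ℤ_d`. -/
noncomputable def convU (d n : ℕ) [Fact (Nat.Prime d)] (g00 g01 g10 g11 : ZMod d) :
    Matrix (QV d n × QV d n) (QV d n × QV d n) ℂ :=
  Matrix.of fun kl ij =>
    if kl = ((fun a => (g00 * g11 - g01 * g10)⁻¹ * g11 * ij.1 a
                      - (g00 * g11 - g01 * g10)⁻¹ * g10 * ij.2 a : QV d n),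
             (fun a => -((g00 * g11 - g01 * g10)⁻¹ * g01) * ij.1 a
                      + (g00 * g11 - g01 * g10)⁻¹ * g00 * ij.2 a : QV d n))
    then 1 else 0

/-- Tensor (Kronecker) product of two `n`-qudit operators, on the doubled system. -/
def kron {d n : ℕ} (ρ σ : Mat d n) : Matrix (QV d n × QV d n) (QV d n × QV d n) ℂ :=
  Matrix.of fun ij kl => ρ ij.1 kl.1 * σ ij.2 kl.2

/-- Partial trace over the second `n`-qudit factor. -/
noncomputable def ptrB {d n : ℕ} [Fact (Nat.Prime d)]
    (M : Matrix (QV d n × QV d n) (QV d n × QV d n) ℂ) : Mat d n :=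
  Matrix.of fun i i' => ∑ j : QV d n, M (i, j) (i', j)

/-- The convolution `ρ ⊠ σ = Tr_B[U (ρ ⊗ σ) U†]` with parameter matrix
`G = [g₀₀, g₀₁; g₁₀, g₁₁]`. -/
noncomputable def conv (d n : ℕ) [Fact (Nat.Prime d)] (g00 g01 g10 g11 : ZMod d)
    (ρ σ : Mat d n) : Mat d n :=
  ptrB (convU d n g00 g01 g10 g11 * kron ρ σ * (convU d n g00 g01 g10 g11)ᴴ)

/-- The beam-splitter unitary `U_{s,t}|i,j⟩ = |s i + t j, t i - s j⟩`. -/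
noncomputable def bsU (d n : ℕ) [Fact (Nat.Prime d)] (s t : ZMod d) :
    Matrix (QV d n × QV d n) (QV d n × QV d n) ℂ :=
  Matrix.of fun kl ij =>
    if kl = ((fun a => s * ij.1 a + t * ij.2 a : QV d n),
             (fun a => t * ij.1 a - s * ij.2 a : QV d n))
    then 1 else 0

/-- The beam-splitter convolution `ρ ⊠_{s,t} σ = Tr_B[U_{s,t} (ρ ⊗ σ) U_{s,t}†]`. -/
noncomputable def bsConv (d n : ℕ) [Fact (Nat.Prime d)] (s t : ZMod d)
    (ρ σ : Mat d n) : Mat d n :=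
  ptrB (bsU d n s t * kron ρ σ * (bsU d n s t)ᴴ)

/-- Iterated self-convolution: `⊠^0 ρ = ρ` and `⊠^{N+1} ρ = (⊠^N ρ) ⊠ ρ`. -/
noncomputable def bsIter (d n : ℕ) [Fact (Nat.Prime d)] (s t : ZMod d) :
    ℕ → Mat d n → Mat d n
  | 0, ρ => ρ
  | N + 1, ρ => bsConv d n s t (bsIter d n s t N ρ) ρ

/-- `ρ` is the pure stabilizer state `|ψ⟩⟨ψ|` with stabilizer label group `S ⊆ V^n`:
`S` has order `d^n` and `ψ` is a common eigenvector of all `w(p,q)`, `(p,q) ∈ S`. -/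
noncomputable def IsPureStabilizerWithGroup (d n : ℕ) [Fact (Nat.Prime d)]
    (ρ : Mat d n) (S : AddSubgroup (QV d n × QV d n)) : Prop :=
  Nat.card S = d ^ n ∧
    ∃ ψ : QV d n → ℂ, ψ ≠ 0 ∧
      ρ = Matrix.of (fun a b => ψ a * starRingEnd ℂ (ψ b)) ∧
      ∀ pq ∈ S, ∃ c : ℂ, (weyl d n pq.1 pq.2).mulVec ψ = c • ψ

/-- `ρ` is a pure stabilizer state. -/
noncomputable def IsPureStabilizer (d n : ℕ) [Fact (Nat.Prime d)] (ρ : Mat d n) : Prop :=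
  ∃ S : AddSubgroup (QV d n × QV d n), IsPureStabilizerWithGroup d n ρ S

/-- `ρ` is a stabilizer state: a convex combination of pure stabilizer states. -/
noncomputable def IsStabilizerState (d n : ℕ) [Fact (Nat.Prime d)] (ρ : Mat d n) : Prop :=
  ∃ (m : ℕ) (p : Fin m → ℝ) (τ : Fin m → Mat d n),
    (∀ i, 0 ≤ p i) ∧ ∑ i, p i = 1 ∧ (∀ i, IsPureStabilizer d n (τ i)) ∧
    ρ = ∑ i, (p i : ℂ) • τ i

/-- `U` is a Clifford unitary: a unitary mapping each Weyl operator, under conjugation,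
to a complex phase times a Weyl operator. -/
noncomputable def IsClifford (d n : ℕ) [Fact (Nat.Prime d)] (U : Mat d n) : Prop :=
  U ∈ Matrix.unitaryGroup (QV d n) ℂ ∧
    ∀ pq : QV d n × QV d n, ∃ (c : ℂ) (pq' : QV d n × QV d n),
      ‖c‖ = 1 ∧ U * weyl d n pq.1 pq.2 * Uᴴ = c • weyl d n pq'.1 pq'.2

/-- The divergence-based quantum Fisher information `J(ρ; H) = Tr[ρ [H,[H, log ρ]]]`. -/
noncomputable def fisherJ {d n : ℕ} [Fact (Nat.Prime d)] (ρ H : Mat d n) : ℝ :=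
  (ρ * (H * (H * matLog ρ - matLog ρ * H) - (H * matLog ρ - matLog ρ * H) * H)).trace.re

/-- Embed a single-qudit operator at site `k` of an `n`-qudit system
(tensored with the identity elsewhere). -/
noncomputable def embedAt (d n : ℕ) (k : Fin n) (M : Matrix (ZMod d) (ZMod d) ℂ) :
    Mat d n :=
  Matrix.of fun v w => if ∀ i, i ≠ k → v i = w i then M (v k) (w k) else 0

/-- The rank-one projection `H_j^Z = |j⟩⟨j|` onto the eigenvector of `Z`
with eigenvalue `ξ^j`. -/
noncomputable def projZ (d : ℕ) (j : ZMod d) : Matrix (ZMod d) (ZMod d) ℂ :=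
  Matrix.of fun a b => if a = j ∧ b = j then 1 else 0

/-- The rank-one projection `H_j^X` onto the eigenvector of `X` with eigenvalue `ξ^j`;
its entries are `(H_j^X)_{a b} = d⁻¹ ξ^{j(b-a)}`. -/
noncomputable def projX (d : ℕ) (j : ZMod d) : Matrix (ZMod d) (ZMod d) ℂ :=
  Matrix.of fun a b => (d : ℂ)⁻¹ * ch d (j * (b - a))

/-- Total Fisher information
`J(ρ) = ∑_{k=1}^n ∑_{j ∈ ℤ_d} J(ρ; H_j^{X_k}) + J(ρ; H_j^{Z_k})`. -/
noncomputable def fisherTotal (d n : ℕ) [Fact (Nat.Prime d)] (ρ : Mat d n) : ℝ :=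
  ∑ k : Fin n, ∑ j : ZMod d,
    (fisherJ ρ (embedAt d n k (projX d j)) + fisherJ ρ (embedAt d n k (projZ d j)))

/-- Holevo capacity of a channel `E`:
`χ(E) = sup H(∑ p_i E(ρ_i)) - ∑ p_i H(E(ρ_i))` over finite ensembles of states. -/
noncomputable def holevoCap (d n : ℕ) [Fact (Nat.Prime d)] (E : Mat d n → Mat d n) : ℝ :=
  ⨆ m : ℕ, ⨆ p : Fin m → ℝ, ⨆ ρs : Fin m → Mat d n,
    ⨆ _ : (∀ i, 0 ≤ p i) ∧ ∑ i, p i = 1 ∧ ∀ i, IsState d n (ρs i),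
      (vnEnt (∑ i, (p i : ℂ) • E (ρs i)) - ∑ i, p i * vnEnt (E (ρs i)))

/-- Hilbert–Schmidt norm `‖A‖₂ = (Tr[A†A])^{1/2}`. -/
noncomputable def hsNorm {d n : ℕ} [Fact (Nat.Prime d)] (A : Mat d n) : ℝ :=
  Real.sqrt ((Aᴴ * A).trace.re)

/-- Trace norm `‖A‖₁ = Tr[(A†A)^{1/2}]`. -/
noncomputable def trNorm {d n : ℕ} [Fact (Nat.Prime d)] (A : Mat d n) : ℝ :=
  (matRpow (Aᴴ * A) (2⁻¹ : ℝ)).trace.re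

/-- Tensor product of an `n₁`-qudit operator with an `n₂`-qudit operator,
as an `(n₁+n₂)`-qudit operator. -/
def tensorMat (d n₁ n₂ : ℕ) (ρ₁ : Mat d n₁) (ρ₂ : Mat d n₂) : Mat d (n₁ + n₂) :=
  Matrix.of fun v w =>
    ρ₁ (fun i => v (Fin.castAdd n₂ i)) (fun i => w (Fin.castAdd n₂ i)) *
    ρ₂ (fun j => v (Fin.natAdd n₁ j)) (fun j => w (Fin.natAdd n₁ j))

/-! ### Qubit (`d = 2`) specific definitions -/

/-- The `n`-qubit Weyl (Pauli) operator `w(p,q) = ⊗_i i^{-p_i q_i} Z^{p_i} X^{q_i}`. -/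
noncomputable def weyl2 (n : ℕ) (p q : Fin n → ZMod 2) :
    Matrix (Fin n → ZMod 2) (Fin n → ZMod 2) ℂ :=
  Matrix.of fun k' k =>
    if k' = k + q then
      ∏ i, ((-Complex.I) ^ ((p i).val * (q i).val) *
        (-1 : ℂ) ^ ((p i * (k i + q i)).val))
    else 0

/-- The `n`-qubit characteristic function `Ξ_ρ(p,q) = Tr[ρ w(p,q)†]`. -/
noncomputable def xi2 (n : ℕ) (ρ : Matrix (Fin n → ZMod 2) (Fin n → ZMod 2) ℂ)
    (pq : (Fin n → ZMod 2) × (Fin n → ZMod 2)) : ℂ :=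
  (ρ * (weyl2 n pq.1 pq.2)ᴴ).trace

/-- The logarithmic magic gap
`LMG(ρ) = -log₂ max{|Ξ_ρ(p,q)| : Ξ_ρ(p,q) ≠ 0, |Ξ_ρ(p,q)| ≠ 1}` (`0` if the set is
empty). -/
noncomputable def lmg (n : ℕ) (ρ : Matrix (Fin n → ZMod 2) (Fin n → ZMod 2) ℂ) : ℝ :=
  let s : Finset ℝ :=
    (Finset.univ.filter fun pq : (Fin n → ZMod 2) × (Fin n → ZMod 2) =>
      xi2 n ρ pq ≠ 0 ∧ ‖xi2 n ρ pq‖ ≠ 1).image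
      fun pq => ‖xi2 n ρ pq‖
  if h : s.Nonempty then -Real.logb 2 (s.max' h) else 0

/-- `U` is an `n`-qubit Clifford unitary. -/
noncomputable def IsClifford2 (n : ℕ) (U : Matrix (Fin n → ZMod 2) (Fin n → ZMod 2) ℂ) :
    Prop :=
  U ∈ Matrix.unitaryGroup (Fin n → ZMod 2) ℂ ∧
    ∀ pq : (Fin n → ZMod 2) × (Fin n → ZMod 2),
      ∃ (c : ℂ) (pq' : (Fin n → ZMod 2) × (Fin n → ZMod 2)),
        ‖c‖ = 1 ∧ U * weyl2 n pq.1 pq.2 * Uᴴ = c • weyl2 n pq'.1 pq'.2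

/-- The T gate `diag(1, e^{iπ/4})` acting on qubit `k` of an `n`-qubit system. -/
noncomputable def tGateAt (n : ℕ) (k : Fin n) :
    Matrix (Fin n → ZMod 2) (Fin n → ZMod 2) ℂ :=
  embedAt 2 n k (Matrix.of fun a b =>
    if a = b then (if a = 0 then 1 else Complex.exp (Real.pi * Complex.I / 4)) else 0)

/-- An `n`-qubit state: positive semidefinite with trace one. -/
def IsState2 (n : ℕ) (ρ : Matrix (Fin n → ZMod 2) (Fin n → ZMod 2) ℂ) : Prop :=
  ρ.PosSemidef ∧ ρ.trace = 1

end PaperQI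

namespace PaperQI


section helpers

variable {d n : ℕ} [Fact (Nat.Prime d)]

lemma ch_eq (z : ZMod d) : ch d z = ZMod.stdAddChar z := by
  have h := ZMod.stdAddChar_coe (N := d) (z.val : ℤ)
  have h2 : (((z.val : ℤ)) : ZMod d) = z := by simp
  rw [h2] at h
  rw [h, ch]
  push_cast
  rfl

lemma ch_add (a b : ZMod d) : ch d (a + b) = ch d a * ch d b := by
  simp only [ch_eq, AddChar.map_add_eq_mul]

lemma ch_zero : ch d 0 = 1 := by simp [ch_eq]

lemma norm_ch (z : ZMod d) : ‖ch d z‖ = 1 := by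
  rw [ch_eq, ZMod.stdAddChar_apply]; exact Circle.norm_coe _

lemma ch_ne_zero (z : ZMod d) : ch d z ≠ 0 := by
  intro h; have := norm_ch z; rw [h] at this; simp at this

lemma conj_ch (z : ZMod d) : starRingEnd ℂ (ch d z) = ch d (-z) := by
  have h1 : ch d z * ch d (-z) = 1 := by rw [← ch_add]; simp [ch_zero]
  have h2 : ch d z * starRingEnd ℂ (ch d z) = 1 := by
    rw [Complex.mul_conj, Complex.normSq_eq_norm_sq, norm_ch]; simp
  exact mul_left_cancel₀ (ch_ne_zero z) (h2.trans h1.symm)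

lemma qdot_add_left (p p' k : QV d n) : qdot (p + p') k = qdot p k + qdot p' k := by
  simp [qdot, add_mul, Finset.sum_add_distrib]
lemma qdot_add_right (p k k' : QV d n) : qdot p (k + k') = qdot p k + qdot p k' := by
  simp [qdot, mul_add, Finset.sum_add_distrib]
lemma qdot_neg_right (p k : QV d n) : qdot p (-k) = -qdot p k := by
  simp [qdot]
lemma qdot_sub_right (p k k' : QV d n) : qdot p (k - k') = qdot p k - qdot p k' := by
  rw [sub_eq_add_neg, qdot_add_right, qdot_neg_right, sub_eq_add_neg]
lemma qdot_smul_left (c : ZMod d) (p k : QV d n) : qdot (c • p) k = c * qdot p k := by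
  simp [qdot, Finset.mul_sum, mul_assoc]
lemma qdot_smul_right (c : ZMod d) (p k : QV d n) : qdot p (c • k) = c * qdot p k := by
  simp [qdot, Finset.mul_sum, mul_left_comm]

lemma sum_ch (k : QV d n) : ∑ p : QV d n, ch d (qdot p k) = if k = 0 then (d : ℂ) ^ n else 0 := by
  split_ifs with h
  · subst h
    simp [qdot, ch_zero]
  · obtain ⟨i, hi⟩ : ∃ i, k i ≠ 0 := by
      by_contra! hh
      exact h (funext hh)
    let χ : AddChar (QV d n) ℂ :=
      { toFun := fun p => ch d (qdot p k)
        map_zero_eq_one' := by simp [qdot, ch_zero]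
        map_add_eq_mul' := fun p q => by rw [qdot_add_left, ch_add] }
    have hχ : χ ≠ 1 := by
      intro h1
      have h2 : χ (Pi.single i 1) = 1 := by rw [h1]; rfl
      have h3 : ch d (qdot (Pi.single i 1) k) = 1 := h2
      have h4 : qdot (Pi.single i 1) k = k i := by
        simp [qdot, Pi.single_apply]
      rw [h4, ch_eq] at h3
      have h5 : (ZMod.stdAddChar (k i) : ℂ) = ZMod.stdAddChar (0 : ZMod d) := by
        rw [h3]; simp
      exact hi (ZMod.injective_stdAddChar h5)
    exact AddChar.sum_eq_zero_of_ne_one hχ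

lemma parseval1 (f : QV d n → ℂ) :
    ∑ p : QV d n, ‖∑ k, f k * ch d (qdot p k)‖ ^ 2 = (d : ℝ) ^ n * ∑ k, ‖f k‖ ^ 2 := by
  have key : ∑ p : QV d n, ((∑ k, f k * ch d (qdot p k)) *
      starRingEnd ℂ (∑ k, f k * ch d (qdot p k))) = (d : ℂ) ^ n * ∑ k, f k * starRingEnd ℂ (f k) := by
    have h1 : ∀ p : QV d n, ((∑ k, f k * ch d (qdot p k)) *
      starRingEnd ℂ (∑ k, f k * ch d (qdot p k))) =
        ∑ k, ∑ l, f k * starRingEnd ℂ (f l) * ch d (qdot p (k - l)) := by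
      intro p
      rw [map_sum, Finset.sum_mul_sum]
      refine Finset.sum_congr rfl fun k _ => Finset.sum_congr rfl fun l _ => ?_
      rw [map_mul, conj_ch, qdot_sub_right, sub_eq_add_neg, ch_add]
      ring
    simp_rw [h1]
    rw [Finset.sum_comm, Finset.mul_sum]
    refine Finset.sum_congr rfl fun k _ => ?_
    rw [Finset.sum_comm]
    simp_rw [← Finset.mul_sum, sum_ch, sub_eq_zero]
    simp [mul_comm]
  have h2 : ∀ z : ℂ, z * starRingEnd ℂ z = ((‖z‖ ^ 2 : ℝ) : ℂ) := fun z => by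
    rw [Complex.mul_conj, Complex.normSq_eq_norm_sq]
  simp_rw [h2] at key
  exact_mod_cast key

/-- Characteristic function up to phases. -/
noncomputable def FF (ρ : Mat d n) (v : QV d n × QV d n) : ℂ :=
  ∑ k, ρ k (k + v.2) * ch d (qdot v.1 k)

/-- Squared Hilbert-Schmidt norm. -/
noncomputable def QQ (ρ : Mat d n) : ℝ := ∑ i, ∑ j, ‖ρ i j‖ ^ 2

lemma parseval (ρ : Mat d n) : ∑ v, ‖FF ρ v‖ ^ 2 = (d : ℝ) ^ n * QQ ρ := by
  rw [Fintype.sum_prod_type_right]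
  simp only [FF]
  have h : ∀ q : QV d n, ∑ p : QV d n, ‖∑ k, ρ k (k + q) * ch d (qdot p k)‖ ^ 2
    = (d : ℝ) ^ n * ∑ k, ‖ρ k (k + q)‖ ^ 2 := fun q => parseval1 fun k => ρ k (k + q)
  simp_rw [h]
  rw [← Finset.mul_sum, Finset.sum_comm, QQ]
  congr 1
  refine Finset.sum_congr rfl fun k _ => ?_
  exact Equiv.sum_comp (Equiv.addLeft k) fun j => ‖ρ k j‖ ^ 2

open scoped MatrixOrder in
lemma gram {ρ : Mat d n} (h : IsState d n ρ) :
    ∃ b : QV d n → EuclideanSpace ℂ (QV d n), (∀ i j, ρ i j = inner ℂ (b i) (b j)) ∧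
      ∑ i, ‖b i‖ ^ 2 = 1 := by
  obtain ⟨B, hB⟩ := CStarAlgebra.nonneg_iff_eq_star_mul_self.mp h.1.nonneg
  have h1 : ∀ i j, ρ i j = inner ℂ (WithLp.toLp 2 (fun k => B k i) : EuclideanSpace ℂ (QV d n))
      (WithLp.toLp 2 (fun k => B k j)) := by
    intro i j
    rw [hB, PiLp.inner_apply, Matrix.mul_apply]
    refine Finset.sum_congr rfl fun k _ => ?_
    simp [mul_comm]
  refine ⟨_, h1, ?_⟩
  have h2 := h.2
  rw [Matrix.trace] at h2
  simp_rw [Matrix.diag_apply, h1, inner_self_eq_norm_sq_to_K] at h2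
  have h3 := congrArg Complex.re h2
  rw [Complex.re_sum] at h3
  rw [Complex.one_re] at h3
  rw [← h3]
  refine Finset.sum_congr rfl fun k _ => ?_
  rw [← RCLike.ofReal_pow]
  rfl

lemma FF_le {ρ : Mat d n} (h : IsState d n ρ) (v) : ‖FF ρ v‖ ≤ 1 := by
  obtain ⟨b, hb, hs⟩ := gram h
  have h1 : ‖FF ρ v‖ ≤ ∑ k, (‖b k‖ ^ 2 + ‖b (k + v.2)‖ ^ 2) / 2 := by
    refine (norm_sum_le _ _).trans (Finset.sum_le_sum fun k _ => ?_)
    rw [norm_mul, norm_ch, hb, mul_one]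
    refine (norm_inner_le_norm _ _).trans ?_
    nlinarith [sq_nonneg (‖b k‖ - ‖b (k + v.2)‖)]
  have h2 : ∑ k, ‖b (k + v.2)‖ ^ 2 = ∑ k, ‖b k‖ ^ 2 :=
    Equiv.sum_comp (Equiv.addRight v.2) fun j => ‖b j‖ ^ 2
  rw [← Finset.sum_div, Finset.sum_add_distrib, h2, hs] at h1
  linarith

lemma QQ_le {ρ : Mat d n} (h : IsState d n ρ) : QQ ρ ≤ 1 := by
  obtain ⟨b, hb, hs⟩ := gram h
  have : (1 : ℝ) = ∑ i, ∑ j, ‖b i‖ ^ 2 * ‖b j‖ ^ 2 := by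
    rw [← Finset.sum_mul_sum, hs]; norm_num
  rw [this, QQ]
  refine Finset.sum_le_sum fun i _ => Finset.sum_le_sum fun j _ => ?_
  rw [hb, ← mul_pow]
  exact pow_le_pow_left₀ (norm_nonneg _) (norm_inner_le_norm _ _) 2

lemma pure_of_QQ {ρ : Mat d n} (h : IsState d n ρ) (hQ : QQ ρ = 1) :
    ∃ ψ : QV d n → ℂ, ρ = Matrix.of (fun a b => ψ a * starRingEnd ℂ (ψ b)) := by
  obtain ⟨b, hb, hs⟩ := gram h
  have h1 : (1 : ℝ) = ∑ i, ∑ j, ‖b i‖ ^ 2 * ‖b j‖ ^ 2 := by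
    rw [← Finset.sum_mul_sum, hs]; norm_num
  have hle : ∀ i j, ‖ρ i j‖ ^ 2 ≤ ‖b i‖ ^ 2 * ‖b j‖ ^ 2 := fun i j => by
    rw [hb, ← mul_pow]
    exact pow_le_pow_left₀ (norm_nonneg _) (norm_inner_le_norm _ _) 2
  have heq : ∀ i j, ‖ρ i j‖ ^ 2 = ‖b i‖ ^ 2 * ‖b j‖ ^ 2 := by
    rw [h1, QQ] at hQ
    have h2 := (Finset.sum_eq_sum_iff_of_le
      (fun i _ => Finset.sum_le_sum fun j _ => hle i j)).1 hQ
    intro i j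
    exact (Finset.sum_eq_sum_iff_of_le (fun j _ => hle i j)).1 (h2 i (Finset.mem_univ _)) j
      (Finset.mem_univ _)
  obtain ⟨c, hc⟩ : ∃ c, b c ≠ 0 := by
    by_contra! hh
    simp [hh] at hs
  have hpar : ∀ i, ∃ r : ℂ, b i = r • b c := by
    intro i
    have h3 : ‖inner ℂ (b c) (b i)‖ = ‖b c‖ * ‖b i‖ := by
      have := heq c i
      rw [hb, ← mul_pow] at this
      exact (pow_left_inj₀ (norm_nonneg _) (by positivity) two_ne_zero).1 this
    have h4 : b c = 0 ∨ ∃ r : ℂ, b i = r • b c :=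
      ((norm_inner_eq_norm_tfae ℂ (b c) (b i)).out 0 2).1 h3
    exact h4.resolve_left hc
  choose r hr using hpar
  refine ⟨fun i => starRingEnd ℂ (r i) * ‖b c‖, ?_⟩
  ext i j
  rw [hb, hr i, hr j, inner_smul_left, inner_smul_right, inner_self_eq_norm_sq_to_K]
  simp
  ring

lemma QQ_pure {ρ : Mat d n} {ψ : QV d n → ℂ} (htr : ρ.trace = 1)
    (h : ρ = Matrix.of (fun a b => ψ a * starRingEnd ℂ (ψ b))) :
    ∑ i, ‖ψ i‖ ^ 2 = 1 ∧ QQ ρ = 1 := by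
  have h1 : ∑ i, ‖ψ i‖ ^ 2 = 1 := by
    rw [h, Matrix.trace] at htr
    simp only [Matrix.diag_apply, Matrix.of_apply, Complex.mul_conj,
      Complex.normSq_eq_norm_sq] at htr
    exact_mod_cast htr
  refine ⟨h1, ?_⟩
  simp only [QQ, h, Matrix.of_apply, norm_mul, RCLike.norm_conj, mul_pow]
  rw [← Finset.sum_mul_sum, h1, one_mul]


lemma weyl_mulVec (p q : QV d n) (ψ : QV d n → ℂ) (k : QV d n) :
    (weyl d n p q).mulVec ψ k = ch d (qdot p (k - q) + (2 : ZMod d)⁻¹ * qdot p q) * ψ (k - q) := by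
  simp only [Matrix.mulVec, dotProduct, weyl, Matrix.of_apply]
  rw [Finset.sum_eq_single (k - q)]
  · simp
  · intro b _ hb
    rw [if_neg, zero_mul]
    intro h
    exact hb (by rw [h]; simp)
  · simp

lemma eig_iff {ρ : Mat d n} {ψ : QV d n → ℂ} (hs : ∑ i, ‖ψ i‖ ^ 2 = 1)
    (h : ρ = Matrix.of (fun a b => ψ a * starRingEnd ℂ (ψ b))) (v : QV d n × QV d n) :
    (∃ c : ℂ, (weyl d n v.1 v.2).mulVec ψ = c • ψ) ↔ ‖FF ρ v‖ = 1 := by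
  set φ := (weyl d n v.1 v.2).mulVec ψ with hφ
  have hF : ch d ((2 : ZMod d)⁻¹ * qdot v.1 v.2) * FF ρ v = ∑ k, φ k * starRingEnd ℂ (ψ k) := by
    rw [FF, Finset.mul_sum, ← Equiv.sum_comp (Equiv.addRight v.2)
      (fun k => φ k * starRingEnd ℂ (ψ k))]
    refine Finset.sum_congr rfl fun k _ => ?_
    simp only [Equiv.coe_addRight, hφ, weyl_mulVec, add_sub_cancel_right, h, Matrix.of_apply,
      ch_add]
    ring
  have hn : ∑ k, ‖φ k‖ ^ 2 = 1 := by
    rw [← hs, ← Equiv.sum_comp (Equiv.subRight v.2) (fun k => ‖ψ k‖ ^ 2)]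
    refine Finset.sum_congr rfl fun k _ => ?_
    simp only [hφ, weyl_mulVec, norm_mul, norm_ch, one_mul, Equiv.subRight_apply]
  have h2 : ∀ z : ℂ, z * starRingEnd ℂ z = ((‖z‖ ^ 2 : ℝ) : ℂ) := fun z => by
    rw [Complex.mul_conj, Complex.normSq_eq_norm_sq]
  have hsC : ∑ k, ψ k * starRingEnd ℂ (ψ k) = 1 := by
    simp_rw [h2]; exact_mod_cast hs
  have hnC : ∑ k, φ k * starRingEnd ℂ (φ k) = 1 := by
    simp_rw [h2]; exact_mod_cast hn
  have hnorm : ‖FF ρ v‖ = ‖∑ k, φ k * starRingEnd ℂ (ψ k)‖ := by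
    rw [← hF, norm_mul, norm_ch, one_mul]
  rw [hnorm]
  constructor
  · rintro ⟨c, hc⟩
    have h3 : ∑ k, φ k * starRingEnd ℂ (ψ k) = c := by
      rw [hc]
      simp only [Pi.smul_apply, smul_eq_mul, mul_assoc]
      rw [← Finset.mul_sum, hsC, mul_one]
    rw [h3]
    rw [hc] at hn
    simp only [Pi.smul_apply, smul_eq_mul, norm_mul, mul_pow] at hn
    rw [← Finset.mul_sum, hs, mul_one] at hn
    exact (pow_eq_one_iff_of_nonneg (norm_nonneg _) two_ne_zero).1 hn
  · intro h1
    set c := ∑ k, φ k * starRingEnd ℂ (ψ k) with hc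
    refine ⟨c, ?_⟩
    have hcc : c * starRingEnd ℂ c = 1 := by rw [h2, h1]; simp
    have hcs : starRingEnd ℂ c = ∑ k, ψ k * starRingEnd ℂ (φ k) := by
      rw [hc, map_sum]
      refine Finset.sum_congr rfl fun k _ => ?_
      simp [mul_comm]
    have h0 : ∑ k, (φ k - c * ψ k) * starRingEnd ℂ (φ k - c * ψ k) = 0 := by
      have : ∀ k, (φ k - c * ψ k) * starRingEnd ℂ (φ k - c * ψ k) =
          φ k * starRingEnd ℂ (φ k) - c * (ψ k * starRingEnd ℂ (φ k))
          - starRingEnd ℂ c * (φ k * starRingEnd ℂ (ψ k))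
          + (c * starRingEnd ℂ c) * (ψ k * starRingEnd ℂ (ψ k)) := fun k => by
        simp only [map_sub, map_mul]; ring
      simp_rw [this]
      rw [Finset.sum_add_distrib, Finset.sum_sub_distrib, Finset.sum_sub_distrib,
        ← Finset.mul_sum, ← Finset.mul_sum, ← Finset.mul_sum, hnC, hsC, ← hcs, ← hc,
        mul_comm _ c, hcc]
      ring
    simp_rw [h2] at h0
    have h0' : ∑ k, ‖φ k - c * ψ k‖ ^ 2 = 0 := by exact_mod_cast h0
    rw [Finset.sum_eq_zero_iff_of_nonneg (fun _ _ => by positivity)] at h0'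
    ext k
    have := h0' k (Finset.mem_univ _)
    rw [sq_eq_zero_iff, norm_eq_zero, sub_eq_zero] at this
    exact this

lemma eig_add {ψ : QV d n → ℂ} {u v : QV d n × QV d n}
    (hu : ∃ c : ℂ, (weyl d n u.1 u.2).mulVec ψ = c • ψ)
    (hv : ∃ c : ℂ, (weyl d n v.1 v.2).mulVec ψ = c • ψ) :
    ∃ c : ℂ, (weyl d n (u + v).1 (u + v).2).mulVec ψ = c • ψ := by
  obtain ⟨a, ha⟩ := hu
  obtain ⟨b, hb⟩ := hv
  refine ⟨ch d ((2 : ZMod d)⁻¹ * (qdot u.1 v.2 + qdot v.1 u.2) - qdot u.1 v.2) * (a * b), ?_⟩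
  ext k
  have e1 := congrFun ha k
  have e2 := congrFun hb (k - u.2)
  simp only [weyl_mulVec, Pi.smul_apply, smul_eq_mul] at e1 e2
  simp only [weyl_mulVec, Pi.smul_apply, smul_eq_mul, Prod.fst_add, Prod.snd_add]
  have e3 : ch d ((2 : ZMod d)⁻¹ * (qdot u.1 v.2 + qdot v.1 u.2) - qdot u.1 v.2) * (a * b) * ψ k
     = ch d ((2 : ZMod d)⁻¹ * (qdot u.1 v.2 + qdot v.1 u.2) - qdot u.1 v.2) * (b * (a * ψ k)) := by
    ring
  rw [e3, ← e1, mul_left_comm b, ← e2, ← mul_assoc, ← mul_assoc, ← ch_add, ← ch_add]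
  rw [sub_sub]
  congr 2
  simp only [qdot_add_left, qdot_add_right, qdot_sub_right]
  ring

/-- The monoid of labels of which `ψ` is an eigenvector. -/
noncomputable def eigMonoid (ψ : QV d n → ℂ) : AddSubmonoid (QV d n × QV d n) where
  carrier := {v | ∃ c : ℂ, (weyl d n v.1 v.2).mulVec ψ = c • ψ}
  add_mem' := eig_add
  zero_mem' := ⟨1, by ext k; simp [weyl_mulVec, qdot, ch_zero]⟩

/-- The group of labels of which `ψ` is an eigenvector. -/
noncomputable def eigGroup (ψ : QV d n → ℂ) : AddSubgroup (QV d n × QV d n) where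
  toAddSubmonoid := eigMonoid ψ
  neg_mem' := by
    intro v hv
    have h1 := AddSubmonoid.nsmul_mem (eigMonoid ψ) hv (d - 1)
    have hp : 1 ≤ d := (Fact.out : Nat.Prime d).one_le
    have h2 : (d - 1) • v = -v := by
      have h3 : (d - 1) • v + v = 0 := by
        rw [← succ_nsmul, Nat.sub_add_cancel hp]
        ext a <;> simp
      exact eq_neg_of_add_eq_zero_left h3
    rw [h2] at h1
    exact h1

lemma mem_eigGroup (ψ : QV d n → ℂ) (v) :
    v ∈ eigGroup ψ ↔ ∃ c : ℂ, (weyl d n v.1 v.2).mulVec ψ = c • ψ := Iff.rfl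

lemma sum_ind (S : AddSubgroup (QV d n × QV d n)) :
    ∑ v, (if v ∈ S then (1 : ℝ) else 0) = Nat.card S := by
  rw [Finset.sum_boole, Nat.card_eq_fintype_card, Fintype.card_subtype]

lemma stab_ind {ρ : Mat d n} (h : IsState d n ρ) {S : AddSubgroup (QV d n × QV d n)}
    (hS : IsPureStabilizerWithGroup d n ρ S) (v) :
    ‖FF ρ v‖ ^ 2 = if v ∈ S then (1 : ℝ) else 0 := by
  obtain ⟨hc, ψ, -, hψ, he⟩ := hS
  obtain ⟨hs, hQ⟩ := QQ_pure h.2 hψ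
  have h1 : ∀ v ∈ Finset.univ, (if v ∈ S then (1 : ℝ) else 0) ≤ ‖FF ρ v‖ ^ 2 := by
    intro v _
    split_ifs with hv
    · rw [(eig_iff hs hψ v).1 (he v hv)]; norm_num
    · positivity
  have h2 : ∑ v, (if v ∈ S then (1 : ℝ) else 0) = ∑ v, ‖FF ρ v‖ ^ 2 := by
    rw [sum_ind, hc, parseval, hQ]; simp
  exact ((Finset.sum_eq_sum_iff_of_le h1).1 h2 v (Finset.mem_univ _)).symm

lemma stab_of {ρ : Mat d n} (h : IsState d n ρ) (hQ : QQ ρ = 1)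
    (h01 : ∀ v, ‖FF ρ v‖ = 0 ∨ ‖FF ρ v‖ = 1) :
    ∃ S, IsPureStabilizerWithGroup d n ρ S ∧ ∀ v, v ∈ S ↔ ‖FF ρ v‖ = 1 := by
  obtain ⟨ψ, hψ⟩ := pure_of_QQ h hQ
  obtain ⟨hs, -⟩ := QQ_pure h.2 hψ
  have hm : ∀ v, v ∈ eigGroup ψ ↔ ‖FF ρ v‖ = 1 := fun v => by
    rw [mem_eigGroup, eig_iff hs hψ]
  refine ⟨eigGroup ψ, ⟨?_, ψ, ?_, hψ, fun v hv => hv⟩, hm⟩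
  · have h1 := parseval ρ
    rw [hQ, mul_one] at h1
    have h2 : ∑ v, ‖FF ρ v‖ ^ 2 = ∑ v, (if v ∈ eigGroup ψ then (1 : ℝ) else 0) := by
      refine Finset.sum_congr rfl fun v _ => ?_
      split_ifs with hv
      · rw [(hm v).1 hv]; norm_num
      · rw [(h01 v).resolve_right (fun hh => hv ((hm v).2 hh))]; norm_num
    rw [h2, sum_ind] at h1
    exact_mod_cast h1
  · rintro rfl
    simp at hs

/-- The linear change of variables. -/
noncomputable def EE (g00 g01 g10 g11 : ZMod d) (hdet : g00 * g11 - g01 * g10 ≠ 0) :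
    (QV d n × QV d n) ≃ (QV d n × QV d n) where
  toFun ij := ((fun a => (g00 * g11 - g01 * g10)⁻¹ * g11 * ij.1 a
                      - (g00 * g11 - g01 * g10)⁻¹ * g10 * ij.2 a : QV d n),
             (fun a => -((g00 * g11 - g01 * g10)⁻¹ * g01) * ij.1 a
                      + (g00 * g11 - g01 * g10)⁻¹ * g00 * ij.2 a : QV d n))
  invFun kl := (g00 • kl.1 + g10 • kl.2, g01 • kl.1 + g11 • kl.2)
  left_inv ij := by
    ext a <;> simp <;> field_simp <;> ring
  right_inv kl := by
    ext a <;> simp <;> field_simp <;> ring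

lemma conv_apply (g00 g01 g10 g11 : ZMod d) (hdet : g00 * g11 - g01 * g10 ≠ 0)
    (ρ σ : Mat d n) (i i' : QV d n) : conv d n g00 g01 g10 g11 ρ σ i i' =
      ∑ j, ρ (g00 • i + g10 • j) (g00 • i' + g10 • j) *
        σ (g01 • i + g11 • j) (g01 • i' + g11 • j) := by
  have hU : ∀ kl ij, convU d n g00 g01 g10 g11 kl ij =
      if ij = (EE g00 g01 g10 g11 hdet).symm kl then 1 else 0 := by
    intro kl ij
    have h1 : convU d n g00 g01 g10 g11 kl ij =
      if kl = (EE g00 g01 g10 g11 hdet) ij then 1 else 0 := rfl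
    rw [h1]
    congr 1
    rw [Equiv.eq_symm_apply]
    exact propext eq_comm
  simp only [conv, ptrB, Matrix.of_apply]
  refine Finset.sum_congr rfl fun j _ => ?_
  simp only [Matrix.mul_apply, Matrix.conjTranspose_apply, hU]
  simp
  rfl

lemma conv_state (g00 g01 g10 g11 : ZMod d) (hdet : g00 * g11 - g01 * g10 ≠ 0)
    (ρ σ : Mat d n) (hρ : IsState d n ρ) (hσ : IsState d n σ) :
    (conv d n g00 g01 g10 g11 ρ σ).PosSemidef := by
  have h : conv d n g00 g01 g10 g11 ρ σ = ∑ j : QV d n,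
      (Matrix.kroneckerMap (· * ·) ρ σ).submatrix
        (fun i => (g00 • i + g10 • j, g01 • i + g11 • j))
        (fun i => (g00 • i + g10 • j, g01 • i + g11 • j)) := by
    ext i i'
    rw [conv_apply _ _ _ _ hdet, Matrix.sum_apply]
    rfl
  rw [h]
  exact Matrix.posSemidef_sum _ fun j _ => (hρ.1.kronecker hσ.1).submatrix _

lemma FF_conv (g00 g01 g10 g11 : ZMod d) (hdet : g00 * g11 - g01 * g10 ≠ 0)
    (ρ σ : Mat d n) (v : QV d n × QV d n) :
    FF (conv d n g00 g01 g10 g11 ρ σ) v =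
      FF ρ (((g00 * g11 - g01 * g10)⁻¹ * g11) • v.1, g00 • v.2) *
      FF σ ((-((g00 * g11 - g01 * g10)⁻¹ * g10)) • v.1, g01 • v.2) := by
  simp only [FF, conv_apply _ _ _ _ hdet]
  rw [Finset.sum_mul_sum, ← Fintype.sum_prod_type', ← Equiv.sum_comp (EE g00 g01 g10 g11 hdet).symm,
    Fintype.sum_prod_type]
  refine Finset.sum_congr rfl fun k _ => ?_
  rw [Finset.sum_mul]
  refine Finset.sum_congr rfl fun j _ => ?_
  have e : (EE g00 g01 g10 g11 hdet).symm (k, j) = (g00 • k + g10 • j, g01 • k + g11 • j) := rfl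
  rw [e]
  have hph : qdot v.1 k = qdot (((g00 * g11 - g01 * g10)⁻¹ * g11) • v.1) (g00 • k + g10 • j)
      + qdot ((-((g00 * g11 - g01 * g10)⁻¹ * g10)) • v.1) (g01 • k + g11 • j) := by
    simp only [qdot_smul_left, qdot_smul_right, qdot_add_right]
    field_simp
    ring
  rw [hph, ch_add, smul_add, smul_add, add_right_comm, add_right_comm (g01 • k)]
  ring

lemma FF_zero (ρ : Mat d n) : FF ρ (0, 0) = ρ.trace := by
  simp [FF, qdot, ch_zero, Matrix.trace]

lemma conv_isState (g00 g01 g10 g11 : ZMod d) (hdet : g00 * g11 - g01 * g10 ≠ 0)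
    (ρ σ : Mat d n) (hρ : IsState d n ρ) (hσ : IsState d n σ) :
    IsState d n (conv d n g00 g01 g10 g11 ρ σ) := by
  refine ⟨conv_state _ _ _ _ hdet _ _ hρ hσ, ?_⟩
  rw [← FF_zero, FF_conv _ _ _ _ hdet]
  simp [FF_zero, hρ.2, hσ.2]

/-- Scaling of labels. -/
noncomputable def SC (s t : ZMod d) (hs : s ≠ 0) (ht : t ≠ 0) :
    (QV d n × QV d n) ≃ (QV d n × QV d n) where
  toFun v := (s • v.1, t • v.2)
  invFun v := (s⁻¹ • v.1, t⁻¹ • v.2)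
  left_inv v := by simp [smul_smul, hs, ht]
  right_inv v := by simp [smul_smul, hs, ht]

end helpers

/-- Minimal output entropy: `ρ ⊠ σ` is pure iff `ρ` and `σ` are pure
stabilizer states whose stabilizer label groups `S₁, S₂` satisfy
`S₁ = {(-g₁₀⁻¹ g₁₁ x, g₀₁⁻¹ g₀₀ y) : (x,y) ∈ S₂}`. -/
theorem statement15 (d n : ℕ) [Fact (Nat.Prime d)] (hd : Odd d) (hn : 1 ≤ n)
    (g00 g01 g10 g11 : ZMod d) (h00 : g00 ≠ 0) (h01 : g01 ≠ 0)
    (h10 : g10 ≠ 0) (h11 : g11 ≠ 0) (hdet : g00 * g11 - g01 * g10 ≠ 0)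
    (ρ σ : Mat d n) (hρ : IsState d n ρ) (hσ : IsState d n σ) :
    (∃ ψ : QV d n → ℂ, conv d n g00 g01 g10 g11 ρ σ =
        Matrix.of fun a b => ψ a * starRingEnd ℂ (ψ b)) ↔
      ∃ S₁ S₂ : AddSubgroup (QV d n × QV d n),
        IsPureStabilizerWithGroup d n ρ S₁ ∧ IsPureStabilizerWithGroup d n σ S₂ ∧
        (S₁ : Set (QV d n × QV d n)) =
          (fun xy : QV d n × QV d n =>
            ((fun a => -(g10⁻¹ * g11) * xy.1 a : QV d n),
             (fun a => g01⁻¹ * g00 * xy.2 a : QV d n))) ''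
            (S₂ : Set (QV d n × QV d n)) := by
  set N := (g00 * g11 - g01 * g10)⁻¹ with hN
  have hN0 : N ≠ 0 := inv_ne_zero hdet
  have hA : N * g11 ≠ 0 := mul_ne_zero hN0 h11
  have hB : -(N * g10) ≠ 0 := neg_ne_zero.2 (mul_ne_zero hN0 h10)
  have hC1 : -(g10⁻¹ * g11) ≠ 0 := neg_ne_zero.2 (mul_ne_zero (inv_ne_zero h10) h11)
  have hC2 : g01⁻¹ * g00 ≠ 0 := mul_ne_zero (inv_ne_zero h01) h00
  let A : (QV d n × QV d n) ≃ (QV d n × QV d n) := SC (N * g11) g00 hA h00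
  let B : (QV d n × QV d n) ≃ (QV d n × QV d n) := SC (-(N * g10)) g01 hB h01
  let C : (QV d n × QV d n) ≃ (QV d n × QV d n) := SC _ _ hC1 hC2
  have hCB : ∀ v, C (B v) = A v := by
    intro v
    have e1 : -(g10⁻¹ * g11) * -(N * g10) = N * g11 := by field_simp
    have e2 : g01⁻¹ * g00 * g01 = g00 := by field_simp
    change (-(g10⁻¹ * g11) • (-(N * g10)) • v.1, (g01⁻¹ * g00) • g01 • v.2) =
      ((N * g11) • v.1, g00 • v.2)
    rw [smul_smul, smul_smul, e1, e2]
  have hconv : ∀ v, FF (conv d n g00 g01 g10 g11 ρ σ) v = FF ρ (A v) * FF σ (B v) :=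
    fun v => FF_conv g00 g01 g10 g11 hdet ρ σ v
  have hst := conv_isState g00 g01 g10 g11 hdet ρ σ hρ hσ
  have hdn : (0 : ℝ) < (d : ℝ) ^ n := by
    have : 0 < d := (Fact.out : Nat.Prime d).pos
    positivity
  have hsq : ∀ v, ‖FF (conv d n g00 g01 g10 g11 ρ σ) v‖ ^ 2 =
      ‖FF ρ (A v)‖ ^ 2 * ‖FF σ (B v)‖ ^ 2 := fun v => by rw [hconv, norm_mul, mul_pow]
  have himg : ∀ S₁ S₂ : AddSubgroup (QV d n × QV d n),
      ((S₁ : Set (QV d n × QV d n)) =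
          (fun xy : QV d n × QV d n =>
            ((fun a => -(g10⁻¹ * g11) * xy.1 a : QV d n),
             (fun a => g01⁻¹ * g00 * xy.2 a : QV d n))) ''
            (S₂ : Set (QV d n × QV d n))) ↔ ∀ v, A v ∈ S₁ ↔ B v ∈ S₂ := by
    intro S₁ S₂
    change ((S₁ : Set (QV d n × QV d n)) = C '' (S₂ : Set (QV d n × QV d n))) ↔ _
    constructor
    · intro h v
      rw [← SetLike.mem_coe, h, ← hCB, C.injective.mem_set_image, SetLike.mem_coe]
    · intro h
      ext w
      obtain ⟨v, rfl⟩ := A.surjective w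
      rw [SetLike.mem_coe, h, ← hCB, C.injective.mem_set_image, SetLike.mem_coe]
  have hpc := parseval (conv d n g00 g01 g10 g11 ρ σ)
  have hpρ := parseval ρ
  have hpσ := parseval σ
  simp_rw [hsq] at hpc
  rw [← Equiv.sum_comp A] at hpρ
  rw [← Equiv.sum_comp B] at hpσ
  constructor
  · rintro ⟨ψ, hψ⟩
    obtain ⟨-, hQ⟩ := QQ_pure hst.2 hψ
    rw [hQ, mul_one] at hpc
    have hsqle : ∀ {τ : Mat d n}, IsState d n τ → ∀ v, ‖FF τ v‖ ^ 2 ≤ 1 := fun hτ v =>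
      pow_le_one₀ (norm_nonneg _) (FF_le hτ v)
    have hle1 : ∀ v ∈ Finset.univ, ‖FF ρ (A v)‖ ^ 2 * ‖FF σ (B v)‖ ^ 2 ≤ ‖FF ρ (A v)‖ ^ 2 :=
      fun v _ => mul_le_of_le_one_right (by positivity) (hsqle hσ _)
    have hle2 : ∀ v ∈ Finset.univ, ‖FF ρ (A v)‖ ^ 2 * ‖FF σ (B v)‖ ^ 2 ≤ ‖FF σ (B v)‖ ^ 2 :=
      fun v _ => mul_le_of_le_one_left (by positivity) (hsqle hρ _)
    have hQρ : QQ ρ = 1 := by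
      have := Finset.sum_le_sum hle1
      rw [hpc, hpρ] at this
      exact le_antisymm (QQ_le hρ) (by nlinarith)
    have hQσ : QQ σ = 1 := by
      have := Finset.sum_le_sum hle2
      rw [hpc, hpσ] at this
      exact le_antisymm (QQ_le hσ) (by nlinarith)
    rw [hQρ, mul_one] at hpρ
    rw [hQσ, mul_one] at hpσ
    have e1 := (Finset.sum_eq_sum_iff_of_le hle1).1 (hpc.trans hpρ.symm)
    have e2 := (Finset.sum_eq_sum_iff_of_le hle2).1 (hpc.trans hpσ.symm)
    have e3 : ∀ v, ‖FF ρ (A v)‖ = ‖FF σ (B v)‖ := fun v =>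
      (pow_left_inj₀ (norm_nonneg _) (norm_nonneg _) two_ne_zero).1
        ((e1 v (Finset.mem_univ _)).symm.trans (e2 v (Finset.mem_univ _)))
    have e4 : ∀ v, ‖FF ρ (A v)‖ = 0 ∨ ‖FF ρ (A v)‖ = 1 := fun v => by
      by_cases h0 : ‖FF ρ (A v)‖ = 0
      · exact Or.inl h0
      · right
        have h1 := e1 v (Finset.mem_univ _)
        rw [← e3] at h1
        have h2 : ‖FF ρ (A v)‖ ^ 2 = 1 :=
          mul_left_cancel₀ (pow_ne_zero 2 h0) (h1.trans (mul_one _).symm)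
        exact (pow_eq_one_iff_of_nonneg (norm_nonneg _) two_ne_zero).1 h2
    obtain ⟨S₁, hS₁, hm₁⟩ := stab_of hρ hQρ (fun w => by
      obtain ⟨v, rfl⟩ := A.surjective w; exact e4 v)
    obtain ⟨S₂, hS₂, hm₂⟩ := stab_of hσ hQσ (fun w => by
      obtain ⟨v, rfl⟩ := B.surjective w; rw [← e3]; exact e4 v)
    refine ⟨S₁, S₂, hS₁, hS₂, (himg S₁ S₂).2 fun v => ?_⟩
    rw [hm₁, hm₂, e3]
  · rintro ⟨S₁, S₂, hS₁, hS₂, hrel⟩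
    rw [himg] at hrel
    refine pure_of_QQ hst ?_
    have h1 : ∀ v, ‖FF ρ (A v)‖ ^ 2 * ‖FF σ (B v)‖ ^ 2 = ‖FF σ (B v)‖ ^ 2 := fun v => by
      rw [stab_ind hρ hS₁, stab_ind hσ hS₂]
      simp only [hrel v]
      split_ifs <;> simp
    simp_rw [h1] at hpc
    obtain ⟨-, ψ, -, hψ, -⟩ := hS₂
    rw [hpσ, (QQ_pure hσ.2 hψ).2] at hpc
    exact (mul_left_cancel₀ hdn.ne' hpc).symm

end PaperQI
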